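/- arXiv:2208.04796 — 2 statements merged into one kernel-verified Lean document; each statement's English description precedes it below -/
import Mathlib

section
/- Convolution of normal and exponential tails, balanced case: let X be standard normal and E standard exponential, independent; let (η_N) and (x_N) be sequences with η_N > 0, x_N → ∞, and x_N/η_N → ∞, and let μ > 0, c ∈ ℝ. If (x_N − μη_N²)/(√2·η_N) → c as N→∞, then P(η_N·X + E/μ > x_N) is asymptotically equivalent, as N→∞, to (η_N/(√(2π)·x_N))·exp(−x_N²/(2η_N²)) + (1/2)·exp((μ/2)·(μη_N² − 2x_N))·(1 + erf(c)). -/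
open MeasureTheory ProbabilityTheory Filter Real Set Topology Asymptotics

noncomputable section

/-- The Gauss error function `erf x = (2/√π) ∫_0^x e^{-t²} dt`. -/
def erf (x : ℝ) : ℝ := (2 / Real.sqrt π) * ∫ t in (0 : ℝ)..x, Real.exp (-t ^ 2)

/-!
Conditioning on the Gaussian summand `Y ∼ N(0, η²)` splits the tail `P(Y + E/μ > x)` into
`P(Y > x)` and `𝔼[exp(-μ(x - Y)); Y ≤ x]`. In the second term the exponential tilt shifts the mean
of `Y` by `μη²`, so the tail equals exactly
`(1 - erf(x / (√2 η))) / 2 + exp((μ/2)(μη² - 2x)) (1 + erf((x - μη²) / (√2 η))) / 2`.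
The Mills ratio gives the asymptotics of the first term and continuity of `erf` those of the
second; as both terms are nonnegative, their asymptotic equivalences add up.
-/

lemma hasDerivAt_erf (x : ℝ) : HasDerivAt erf (2 / √π * exp (-x ^ 2)) x :=
  ((by fun_prop : Continuous fun t : ℝ => exp (-t ^ 2)).integral_hasStrictDerivAt
    0 x).hasDerivAt.const_mul _

lemma continuous_erf : Continuous erf :=
  continuous_iff_continuousAt.2 fun x => (hasDerivAt_erf x).continuousAt

lemma strictMono_erf : StrictMono erf :=
  strictMono_of_deriv_pos fun x => by
    rw [(hasDerivAt_erf x).deriv]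
    positivity

lemma erf_neg (x : ℝ) : erf (-x) = -erf x := by
  have h := intervalIntegral.integral_comp_neg (a := 0) (b := x) fun t => exp (-t ^ 2)
  simp only [even_two.neg_pow, neg_zero] at h
  rw [erf, erf, h, intervalIntegral.integral_symm, mul_neg]

lemma tendsto_erf_atTop : Tendsto erf atTop (𝓝 1) := by
  have hint : IntegrableOn (fun t : ℝ => exp (-t ^ 2)) (Ioi 0) := by
    simpa using (integrable_exp_neg_mul_sq one_pos).integrableOn
  have hgauss : ∫ t in Ioi (0 : ℝ), exp (-t ^ 2) = √π / 2 := by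
    simpa using integral_gaussian_Ioi 1
  have h := (intervalIntegral_tendsto_integral_Ioi 0 hint tendsto_id).const_mul (2 / √π)
  rwa [hgauss, div_mul_div_cancel₀' two_ne_zero, div_self (by positivity)] at h

lemma tendsto_erf_atBot : Tendsto erf atBot (𝓝 (-1)) :=
  (tendsto_erf_atTop.comp tendsto_neg_atBot_atTop).neg.congr fun x => by
    simp [erf_neg]

lemma neg_one_lt_erf (x : ℝ) : -1 < erf x :=
  (strictMono_erf.monotone.le_of_tendsto tendsto_erf_atBot (x - 1)).trans_lt
    (strictMono_erf (sub_one_lt x))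

lemma erf_lt_one (x : ℝ) : erf x < 1 := by
  linarith [erf_neg x ▸ neg_one_lt_erf (-x)]

lemma hasDerivAt_exp_neg_sq_div_sqrt_pi_mul {z : ℝ} (hz : z ≠ 0) :
    HasDerivAt (fun z => exp (-z ^ 2) / (√π * z))
      (-((2 + (z ^ 2)⁻¹) / √π * exp (-z ^ 2))) z := by
  convert! (hasDerivAt_pow 2 z).fun_neg.exp.div ((hasDerivAt_id z).const_mul √π)
    (by positivity) using 1
  simp only [id]
  field_simp
  ring

lemma one_sub_erf_isEquivalent :
    (fun z => 1 - erf z) ~[atTop] fun z => exp (-z ^ 2) / (√π * z) := by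
  refine isEquivalent_of_tendsto_one ?_
  have hnum (z : ℝ) : HasDerivAt (fun z => 1 - erf z) (-(2 / √π * exp (-z ^ 2))) z :=
    (hasDerivAt_erf z).const_sub 1
  have hden : ∀ᶠ z in atTop, HasDerivAt (fun z => exp (-z ^ 2) / (√π * z))
      (-((2 + (z ^ 2)⁻¹) / √π * exp (-z ^ 2))) z :=
    (eventually_ne_atTop 0).mono fun _ => hasDerivAt_exp_neg_sq_div_sqrt_pi_mul
  have hden_zero : Tendsto (fun z : ℝ => exp (-z ^ 2) / (√π * z)) atTop (𝓝 0) := by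
    have hexp : Tendsto (fun z : ℝ => exp (-z ^ 2)) atTop (𝓝 0) :=
      tendsto_exp_neg_atTop_nhds_zero.comp (tendsto_pow_atTop two_ne_zero)
    exact hexp.div_atTop (tendsto_id.const_mul_atTop (by positivity))
  refine HasDerivAt.lhopital_zero_atTop (.of_forall hnum) hden
    (.of_forall fun z => neg_ne_zero.2 (by positivity)) ?_ hden_zero ?_
  · simpa using tendsto_erf_atTop.const_sub 1
  · have hratio : Tendsto (fun z : ℝ => 2 / (2 + (z ^ 2)⁻¹)) atTop (𝓝 1) := by
      have hden_two : Tendsto (fun z : ℝ => 2 + (z ^ 2)⁻¹) atTop (𝓝 2) := by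
        simpa using (tendsto_pow_atTop (α := ℝ) two_ne_zero).inv_tendsto_atTop.const_add 2
      have h := (tendsto_const_nhds (x := (2 : ℝ))).div hden_two two_ne_zero
      rwa [div_self two_ne_zero] at h
    refine hratio.congr fun z => ?_
    field_simp

lemma half_one_sub_erf_isEquivalent {ι : Type*} {l : Filter ι} {η x : ι → ℝ}
    (hxη : Tendsto (fun i => x i / η i) l atTop) :
    (fun i => (1 - erf (x i / (√2 * η i))) / 2) ~[l]
      fun i => η i * exp (-x i ^ 2 / (2 * η i ^ 2)) / (√(2 * π) * x i) := by
  have hz : Tendsto (fun i => x i / (√2 * η i)) l atTop :=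
    (hxη.atTop_div_const (by positivity : 0 < √2)).congr fun i => by rw [div_div, mul_comm]
  refine ((one_sub_erf_isEquivalent.comp_tendsto hz).div (.refl (u := fun _ => 2))).congr_right ?_
  filter_upwards [hxη.eventually_ne_atTop 0] with i hi
  obtain ⟨hx, hη⟩ := div_ne_zero_iff.1 hi
  simp only [Function.comp_apply, Pi.div_apply, div_pow, mul_pow, sq_sqrt zero_le_two, neg_div,
    sqrt_mul zero_le_two]
  field_simp
  rw [sq_sqrt zero_le_two]

section Gaussian

variable {v : NNReal}

lemma hasDerivAt_half_one_add_erf (hv : v ≠ 0) (m x : ℝ) :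
    HasDerivAt (fun x => (1 + erf ((x - m) / √(2 * v))) / 2) (gaussianPDFReal m v x) x := by
  have h := (((hasDerivAt_erf ((x - m) / √(2 * v))).comp x
    (((hasDerivAt_id x).sub_const m).div_const √(2 * v))).const_add 1).div_const 2
  convert! h using 1
  simp only [gaussianPDFReal_def]
  rw [div_pow, sq_sqrt (by positivity), neg_div, mul_right_comm 2 π, sqrt_mul (by positivity)]
  field_simp

lemma gaussianReal_real_Iic (hv : v ≠ 0) (m x : ℝ) :
    (gaussianReal m v).real (Iic x) = (1 + erf ((x - m) / √(2 * v))) / 2 := by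
  have hv' : 0 < √(2 * v) := by positivity
  have hlim : Tendsto (fun x => (1 + erf ((x - m) / √(2 * v))) / 2) atBot (𝓝 0) := by
    have h := ((tendsto_erf_atBot.comp ((tendsto_atBot_add_const_right atBot (-m)
      tendsto_id).atBot_div_const hv')).const_add 1).div_const 2
    simpa [← sub_eq_add_neg] using h
  rw [measureReal_def, gaussianReal_apply_eq_integral m hv,
    ENNReal.toReal_ofReal (integral_nonneg (gaussianPDFReal_nonneg m v)),
    integral_Iic_of_hasDerivAt_of_tendsto' (fun y _ => hasDerivAt_half_one_add_erf hv m y)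
      (integrable_gaussianPDFReal m v).integrableOn hlim, sub_zero]

lemma gaussianReal_real_Ioi (hv : v ≠ 0) (m x : ℝ) :
    (gaussianReal m v).real (Ioi x) = (1 - erf ((x - m) / √(2 * v))) / 2 := by
  rw [← compl_Iic, probReal_compl_eq_one_sub measurableSet_Iic, gaussianReal_real_Iic hv]
  ring

lemma gaussianPDFReal_mul_exp (hv : v ≠ 0) (m r x : ℝ) :
    gaussianPDFReal m v x * exp (r * x) =
      exp (r * m + r ^ 2 * v / 2) * gaussianPDFReal (m + r * v) v x := by
  simp only [gaussianPDFReal_def]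
  rw [mul_left_comm, mul_assoc, ← exp_add, ← exp_add]
  congr 2
  field_simp
  ring

lemma setIntegral_exp_gaussianReal (hv : v ≠ 0) (m r : ℝ) {s : Set ℝ} (hs : MeasurableSet s) :
    ∫ x in s, exp (r * x) ∂gaussianReal m v =
      exp (r * m + r ^ 2 * v / 2) * (gaussianReal (m + r * v) v).real s := by
  rw [gaussianReal_of_var_ne_zero m hv, setIntegral_withDensity_eq_setIntegral_toReal_smul
    (measurable_gaussianPDF m v) (ae_of_all _ fun _ => gaussianPDF_lt_top) _ hs]
  simp only [toReal_gaussianPDF, smul_eq_mul, gaussianPDFReal_mul_exp hv]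
  rw [integral_const_mul, measureReal_def, gaussianReal_apply_eq_integral _ hv,
    ENNReal.toReal_ofReal (integral_nonneg (gaussianPDFReal_nonneg _ v))]

end Gaussian

section Exponential

variable {r : ℝ}

lemma expMeasure_real_Ioi (hr : 0 < r) (x : ℝ) :
    (expMeasure r).real (Ioi x) = if 0 ≤ x then exp (-(r * x)) else 1 := by
  have := isProbabilityMeasure_expMeasure hr
  rw [← compl_Iic, probReal_compl_eq_one_sub measurableSet_Iic, ← cdf_eq_real,
    cdf_expMeasure_eq hr]
  split_ifs <;> ring

lemma expMeasure_map_div_const {c : ℝ} (hr : 0 < r) (hc : 0 < c) :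
    (expMeasure r).map (· / c) = expMeasure (r * c) := by
  have := isProbabilityMeasure_expMeasure hr
  have := isProbabilityMeasure_expMeasure (mul_pos hr hc)
  have := Measure.isProbabilityMeasure_map (μ := expMeasure r)
    (by fun_prop : AEMeasurable (· / c) (expMeasure r))
  refine Measure.eq_of_cdf _ _ (StieltjesFunction.ext fun x => ?_)
  have hpre : (· / c) ⁻¹' Iic x = Iic (c * x) := by
    ext y
    simp [div_le_iff₀' hc]
  rw [cdf_eq_real, map_measureReal_apply (by fun_prop) measurableSet_Iic, hpre, ← cdf_eq_real,
    cdf_expMeasure_eq hr, cdf_expMeasure_eq (mul_pos hr hc)]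
  simp only [mul_nonneg_iff_of_pos_left hc, mul_assoc]

lemma conv_expMeasure_real_Ioi (ν : Measure ℝ) [IsFiniteMeasure ν] (hr : 0 < r) (x : ℝ) :
    (ν ∗ expMeasure r).real (Ioi x) =
      ν.real (Ioi x) + ∫ s in Iic x, exp (-(r * (x - s))) ∂ν := by
  have := isProbabilityMeasure_expMeasure hr
  have hsection (s : ℝ) : ∫ e, (Ioi x).indicator (1 : ℝ → ℝ) (s + e) ∂expMeasure r =
      (expMeasure r).real (Ioi (x - s)) := by
    rw [← integral_indicator_one measurableSet_Ioi]
    simp only [indicator, mem_Ioi, sub_lt_iff_lt_add', Pi.one_apply]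
  have hint : Integrable (fun s => (expMeasure r).real (Ioi (x - s))) ν := by
    refine .of_bound (C := 1) (Measurable.aestronglyMeasurable ?_) (ae_of_all _ fun s => ?_)
    · simp only [expMeasure_real_Ioi hr]
      exact Measurable.ite (measurableSet_le (by fun_prop) (by fun_prop)) (by fun_prop)
        (by fun_prop)
    · simp [abs_of_nonneg, measureReal_le_one]
  rw [← integral_indicator_one measurableSet_Ioi,
    integral_conv ((integrable_const 1).indicator measurableSet_Ioi)]
  simp only [hsection]
  have hIoi : ∫ s in Ioi x, (expMeasure r).real (Ioi (x - s)) ∂ν = ν.real (Ioi x) := by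
    rw [setIntegral_congr_fun (g := fun _ => 1) measurableSet_Ioi fun s hs => by
      simp [expMeasure_real_Ioi hr, not_le.2 (mem_Ioi.1 hs)]]
    simp
  have hIic : ∫ s in Iic x, (expMeasure r).real (Ioi (x - s)) ∂ν =
      ∫ s in Iic x, exp (-(r * (x - s))) ∂ν :=
    setIntegral_congr_fun measurableSet_Iic fun s hs => by
      simp [expMeasure_real_Ioi hr, mem_Iic.1 hs]
  rw [← integral_add_compl measurableSet_Iic hint, compl_Iic, hIoi, hIic, add_comm]

end Exponential

lemma gaussianReal_conv_expMeasure_real_Ioi {v : NNReal} {r : ℝ} (hv : v ≠ 0) (hr : 0 < r)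
    (m x : ℝ) :
    (gaussianReal m v ∗ expMeasure r).real (Ioi x) =
      (1 - erf ((x - m) / √(2 * v))) / 2 +
        exp (r * (m - x) + r ^ 2 * v / 2) * ((1 + erf ((x - (m + r * v)) / √(2 * v))) / 2) := by
  have hexp (s : ℝ) : exp (-(r * (x - s))) = exp (-(r * x)) * exp (r * s) := by
    rw [← exp_add]
    ring_nf
  simp only [conv_expMeasure_real_Ioi _ hr, hexp]
  rw [integral_const_mul, setIntegral_exp_gaussianReal hv m r measurableSet_Iic,
    gaussianReal_real_Ioi hv, gaussianReal_real_Iic hv, ← mul_assoc, ← exp_add]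
  ring_nf

section RandomVariables

variable {Ω : Type*} {mΩ : MeasurableSpace Ω} {P : Measure Ω} {X E : Ω → ℝ}

lemma hasLaw_of_map_eq {𝓧 : Type*} [MeasurableSpace 𝓧] {ν : Measure 𝓧} [NeZero ν]
    {Y : Ω → 𝓧} (hY : P.map Y = ν) : HasLaw Y ν P :=
  ⟨.of_map_ne_zero (hY ▸ NeZero.ne ν), hY⟩

lemma measureReal_lt_normal_add_exponential (hX : HasLaw X (gaussianReal 0 1) P)
    (hE : HasLaw E (expMeasure 1) P) (hXE : IndepFun X E P) {η μ : ℝ} (hη : 0 < η) (hμ : 0 < μ)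
    (x : ℝ) :
    P.real {ω | x < η * X ω + E ω / μ} =
      (1 - erf (x / (√2 * η))) / 2 +
        1 / 2 * exp (μ / 2 * (μ * η ^ 2 - 2 * x)) * (1 + erf ((x - μ * η ^ 2) / (√2 * η))) := by
  have := isProbabilityMeasure_expMeasure hμ
  have hηX : HasLaw (fun ω => η * X ω) (gaussianReal 0 (.mk (η ^ 2) (sq_nonneg η))) P := by
    simpa using gaussianReal_const_mul hX η
  have hEμ : HasLaw (fun ω => E ω / μ) (expMeasure μ) P := by
    simpa [Function.comp_def] using
      HasLaw.comp ⟨by fun_prop, expMeasure_map_div_const one_pos hμ⟩ hE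
  have hindep : IndepFun (fun ω => η * X ω) (fun ω => E ω / μ) P :=
    hXE.comp (φ := (η * ·)) (ψ := (· / μ)) (by fun_prop) (by fun_prop)
  rw [(hindep.hasLaw_fun_add hηX hEμ).measureReal_eq (p := (x < ·)) measurableSet_Ioi]
  change (_ ∗ _).real (Ioi x) = _
  have hv : NNReal.mk (η ^ 2) (sq_nonneg η) ≠ 0 := NNReal.coe_ne_zero.1 (pow_pos hη 2).ne'
  rw [gaussianReal_conv_expMeasure_real_Ioi hv hμ, NNReal.coe_mk, sqrt_mul zero_le_two,
    sqrt_sq hη.le]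
  ring_nf

theorem convolution_normal_exponential_balanced_general {ι : Type*} {l : Filter ι}
    {η x μ : ι → ℝ} {c : ℝ} (hX : HasLaw X (gaussianReal 0 1) P) (hE : HasLaw E (expMeasure 1) P)
    (hXE : IndepFun X E P) (hη : ∀ᶠ i in l, 0 < η i) (hμ : ∀ᶠ i in l, 0 < μ i)
    (hxη : Tendsto (fun i => x i / η i) l atTop)
    (hc : Tendsto (fun i => (x i - μ i * η i ^ 2) / (√2 * η i)) l (𝓝 c)) :
    (fun i => P.real {ω | x i < η i * X ω + E ω / μ i}) ~[l] fun i =>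
      η i * exp (-x i ^ 2 / (2 * η i ^ 2)) / (√(2 * π) * x i)
        + 1 / 2 * exp (μ i / 2 * (μ i * η i ^ 2 - 2 * x i)) * (1 + erf c) := by
  have herf : (fun i => 1 + erf ((x i - μ i * η i ^ 2) / (√2 * η i))) ~[l] fun _ => 1 + erf c :=
    (isEquivalent_const_iff_tendsto (by linarith [neg_one_lt_erf c])).2
      (((continuous_erf.tendsto c).comp hc).const_add 1)
  have hexact := (hη.and hμ).mono fun i hi =>
    measureReal_lt_normal_add_exponential hX hE hXE hi.1 hi.2 (x i)
  -- The exact summands are nonnegative at every index, the asymptotic ones only eventually.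
  refine EventuallyEq.trans_isEquivalent hexact (IsEquivalent.symm ?_)
  refine IsEquivalent.add_add_of_nonneg (fun i => ?_) (fun i => ?_)
    (half_one_sub_erf_isEquivalent hxη).symm (IsEquivalent.refl.mul herf.symm)
  · have := erf_lt_one (x i / (√2 * η i))
    exact div_nonneg (by linarith) zero_le_two
  · have := neg_one_lt_erf ((x i - μ i * η i ^ 2) / (√2 * η i))
    exact mul_nonneg (by positivity) (by linarith)

end RandomVariables

/-- **Convolution of normal and exponential tails, balanced case.** If
`(x_N - μ η_N²)/(√2 η_N) → c`, then `ℙ(η_N X + E/μ > x_N)` is asymptotically equivalent to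
`η_N e^{-x_N²/(2η_N²)}/(√(2π) x_N) + (1/2) e^{(μ/2)(μη_N² - 2x_N)} (1 + erf c)`. -/
theorem convolution_normal_exponential_balanced
    {Ω : Type*} [MeasureSpace Ω] [IsProbabilityMeasure (ℙ : Measure Ω)]
    (X E : Ω → ℝ)
    (hX : Measure.map X (ℙ : Measure Ω) = gaussianReal 0 1)
    (hE : Measure.map E (ℙ : Measure Ω) = expMeasure 1)
    (hXE : IndepFun X E (ℙ : Measure Ω))
    (η x : ℕ → ℝ) (hη : ∀ N, 0 < η N)
    (hx : Tendsto x atTop atTop)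
    (hxη : Tendsto (fun N => x N / η N) atTop atTop)
    (μ : ℝ) (hμ : 0 < μ) (c : ℝ)
    (hc : Tendsto (fun N => (x N - μ * (η N) ^ 2) / (Real.sqrt 2 * η N)) atTop (𝓝 c)) :
    (fun N : ℕ => (ℙ {ω | η N * X ω + E ω / μ > x N}).toReal) ~[atTop]
      (fun N : ℕ =>
        η N * Real.exp (-(x N) ^ 2 / (2 * (η N) ^ 2)) / (Real.sqrt (2 * π) * x N)
          + 1 / 2 * Real.exp (μ / 2 * (μ * (η N) ^ 2 - 2 * x N)) * (1 + erf c)) := by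
  have := isProbabilityMeasure_expMeasure one_pos
  exact convolution_normal_exponential_balanced_general (hasLaw_of_map_eq hX) (hasLaw_of_map_eq hE)
    hXE (.of_forall hη) (.of_forall fun _ => hμ) hxη hc

end
end

section
/- Interchange of limit and integral for the scaled hitting-time density: fix a>0, r∈ℝ, β>0, σ>0, σ_A>0 and define g_N as the density of the hitting time τ_i(a,−r). Then lim_{N→∞} ∫_{−∞}^{∞} N·√(log N)·g_N(T_N(a,k)) dk = ∫_{−∞}^{∞} lim_{N→∞} N·√(log N)·g_N(T_N(a,k)) dk, and both sides equal exp(2(1−λ(a))βr/σ²). -/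
/-!
Write `ν = (1 - λ(a)) β > 0` and `h = (1 - λ(a)) f_N(a) - r`, so that `g_N` is the first-passage
density at level `h` for drift `-ν`. Reversing the drift costs the factor `exp (-2 ν h / σ²)`, and
the choice of `λ(a)` makes it exactly `exp (2 ν r / σ²) / N`. Hence `N g_N` is `exp (2 ν r / σ²)`
times a first-passage density with drift *towards* the barrier, an inverse Gaussian density of total
mass one. After the substitution `t = T_N(a,k)` the integral over `k` is therefore eventually
constant, while the rescaled inverse Gaussian density converges pointwise to a centred Gaussian
density, whose mass is also one.
-/

open MeasureTheory Filter Real Set Topology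

noncomputable section

/-- The threshold `f_N(a) = (σ²/(2β) + a) log N`. -/
def fN (β σ a : ℝ) (N : ℕ) : ℝ := (σ ^ 2 / (2 * β) + a) * Real.log N

/-- `λ(a) = 1 - σ/√(2aβ + σ²)`. -/
def lam (β σ a : ℝ) : ℝ := 1 - σ / Real.sqrt (2 * a * β + σ ^ 2)

/-- `T_N(a,k) = f_N(a)/β + k √(log N)`. -/
def TN (β σ a : ℝ) (N : ℕ) (k : ℝ) : ℝ := fN β σ a N / β + k * Real.sqrt (Real.log N)

/-- The density of the first hitting time
`τ_i(a,-r) = inf{t > 0 : W_i(t) - (1-λ(a))βt > (1-λ(a))f_N(a) - r}`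
of a Brownian motion with standard deviation `σ`:
`g_N(t) = ((1-λ(a))f_N(a) - r)/(√(2π) σ t^{3/2})
  · exp(-((1-λ(a))f_N(a) - r + (1-λ(a))βt)²/(2σ²t))`. -/
def hittingDensity (β σ a r : ℝ) (N : ℕ) (t : ℝ) : ℝ :=
  ((1 - lam β σ a) * fN β σ a N - r) / (Real.sqrt (2 * π) * σ * t ^ ((3 : ℝ) / 2)) *
    Real.exp (-((1 - lam β σ a) * fN β σ a N - r + (1 - lam β σ a) * β * t) ^ 2 /
      (2 * σ ^ 2 * t))

section GaussianCDF

open ProbabilityTheory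

lemma hasDerivAt_integral_Iic {E : Type*} [NormedAddCommGroup E] [NormedSpace ℝ E]
    [CompleteSpace E] {f : ℝ → E} {x : ℝ} (hf : Integrable f)
    (hfx : ContinuousAt f x) :
    HasDerivAt (fun y => ∫ s in Iic y, f s) (f x) x := by
  have hsplit : (fun y => ∫ s in Iic y, f s) = fun y => (∫ s in Iic x, f s) + ∫ s in x..y, f s := by
    funext y
    rw [← intervalIntegral.integral_Iic_sub_Iic hf.integrableOn hf.integrableOn, add_sub_cancel]
  rw [hsplit]
  exact (intervalIntegral.integral_hasDerivAt_right hf.intervalIntegrable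
    hf.aestronglyMeasurable.stronglyMeasurableAtFilter hfx).const_add _

lemma continuous_gaussianPDFReal (m : ℝ) (v : NNReal) : Continuous (gaussianPDFReal m v) := by
  unfold gaussianPDFReal
  fun_prop

lemma hasDerivAt_cdf_gaussianReal (m : ℝ) {v : NNReal} (hv : v ≠ 0) (x : ℝ) :
    HasDerivAt (cdf (gaussianReal m v)) (gaussianPDFReal m v x) x := by
  have hcdf : ⇑(cdf (gaussianReal m v)) = fun y => ∫ s in Iic y, gaussianPDFReal m v s := by
    funext y
    rw [cdf_eq_real, measureReal_def, gaussianReal_apply_eq_integral m hv,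
      ENNReal.toReal_ofReal (integral_nonneg fun s => gaussianPDFReal_nonneg m v s)]
  rw [hcdf]
  exact hasDerivAt_integral_Iic (integrable_gaussianPDFReal m v)
    (continuous_gaussianPDFReal m v).continuousAt

end GaussianCDF

section FirstPassage

open ProbabilityTheory

/-- The density at time `t` of the first hitting time of level `h` by a Brownian motion with drift
`ν` and standard deviation `σ`. For `t ≤ 0` it vanishes, by the conventions for `rpow` and division
by zero. -/
def firstPassageDensity (h ν σ t : ℝ) : ℝ :=
  h / (√(2 * π) * σ * t ^ ((3 : ℝ) / 2)) * rexp (-(h - ν * t) ^ 2 / (2 * σ ^ 2 * t))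

/-- The standardized excess `(ν t - h) / (σ √t)` of the mean `ν t` at time `t` over the barrier `h`:
the probability that the motion is above `h` at time `t` is `Φ` of it. -/
def barrierZScore (h ν σ t : ℝ) : ℝ := (ν * t - h) / (σ * √t)

/-- The distribution function of the first hitting time of level `h > 0` with drift `ν`, in the
closed form given by the reflection principle (Bachelier–Lévy formula). -/
def firstPassageCDF (h ν σ t : ℝ) : ℝ :=
  if t ≤ 0 then 0 else
    cdf (gaussianReal 0 1) (barrierZScore h ν σ t) +
      rexp (2 * ν * h / σ ^ 2) * cdf (gaussianReal 0 1) (barrierZScore h (-ν) σ t)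

variable {h ν σ t : ℝ}

lemma rpow_three_halves_of_nonneg (ht : 0 ≤ t) : t ^ ((3 : ℝ) / 2) = t * √t := by
  rw [show (3 : ℝ) / 2 = 1 + 1 / 2 by norm_num, rpow_add_of_nonneg ht zero_le_one (by norm_num),
    rpow_one, sqrt_eq_rpow]

lemma rpow_three_halves_of_nonpos (ht : t ≤ 0) : t ^ ((3 : ℝ) / 2) = 0 := by
  rcases ht.lt_or_eq with ht | rfl
  · rw [rpow_def_of_neg ht, show (3 : ℝ) / 2 * π = π / 2 + π by ring, cos_add_pi, cos_pi_div_two,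
      neg_zero, mul_zero]
  · exact zero_rpow (by norm_num)

lemma firstPassageDensity_of_nonpos (ht : t ≤ 0) : firstPassageDensity h ν σ t = 0 := by
  rw [firstPassageDensity, rpow_three_halves_of_nonpos ht, mul_zero, div_zero, zero_mul]

lemma firstPassageDensity_nonneg (hh : 0 ≤ h) (hσ : 0 ≤ σ) (ht : 0 ≤ t) :
    0 ≤ firstPassageDensity h ν σ t := by
  unfold firstPassageDensity
  positivity

lemma firstPassageDensity_neg_drift (hσ : σ ≠ 0) :
    firstPassageDensity h (-ν) σ t =
      rexp (-(2 * ν * h / σ ^ 2)) * firstPassageDensity h ν σ t := by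
  rcases le_or_gt t 0 with ht | ht
  · rw [firstPassageDensity_of_nonpos ht, firstPassageDensity_of_nonpos ht, mul_zero]
  · have hexponent : -(h - -ν * t) ^ 2 / (2 * σ ^ 2 * t) =
        -(2 * ν * h / σ ^ 2) + -(h - ν * t) ^ 2 / (2 * σ ^ 2 * t) := by
      field_simp
      ring
    rw [firstPassageDensity, firstPassageDensity, hexponent, exp_add]
    ring

lemma firstPassageDensity_eq_gaussianPDFReal_mul (ht : 0 < t) :
    firstPassageDensity h ν σ t =
      gaussianPDFReal 0 1 (barrierZScore h ν σ t) * (h / (σ * (t * √t))) := by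
  have hexponent : -(h - ν * t) ^ 2 / (2 * σ ^ 2 * t) = -barrierZScore h ν σ t ^ 2 / 2 := by
    rw [barrierZScore, div_pow, mul_pow, sq_sqrt ht.le]
    ring
  simp only [firstPassageDensity, gaussianPDFReal, rpow_three_halves_of_nonneg ht.le, hexponent,
    NNReal.coe_one, mul_one, sub_zero]
  ring

lemma gaussianPDFReal_barrierZScore_neg_drift (hσ : σ ≠ 0) (ht : 0 < t) :
    rexp (2 * ν * h / σ ^ 2) * gaussianPDFReal 0 1 (barrierZScore h (-ν) σ t) =
      gaussianPDFReal 0 1 (barrierZScore h ν σ t) := by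
  have hexponent : -barrierZScore h ν σ t ^ 2 / 2 =
      2 * ν * h / σ ^ 2 + -barrierZScore h (-ν) σ t ^ 2 / 2 := by
    simp only [barrierZScore, div_pow, mul_pow, sq_sqrt ht.le]
    field_simp
    ring
  simp only [gaussianPDFReal, NNReal.coe_one, mul_one, sub_zero, hexponent, exp_add]
  ring

lemma hasDerivAt_barrierZScore (hσ : σ ≠ 0) (ht : 0 < t) :
    HasDerivAt (barrierZScore h ν σ) ((ν * t + h) / (2 * σ * (t * √t))) t := by
  have hnum : HasDerivAt (fun s => ν * s - h) ν t := by
    simpa using ((hasDerivAt_id t).const_mul ν).sub_const h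
  have hden : HasDerivAt (fun s => σ * √s) (σ * (1 / (2 * √t))) t :=
    (hasDerivAt_sqrt ht.ne').const_mul σ
  refine (hnum.div hden (by positivity)).congr_deriv ?_
  field_simp
  rw [sq_sqrt ht.le]
  ring

lemma hasDerivAt_firstPassageCDF (hσ : σ ≠ 0) (ht : 0 < t) :
    HasDerivAt (firstPassageCDF h ν σ) (firstPassageDensity h ν σ t) t := by
  have hcdf (μ : ℝ) := (hasDerivAt_cdf_gaussianReal 0 one_ne_zero _).comp t
    (hasDerivAt_barrierZScore (h := h) (ν := μ) hσ ht)
  have hformula := (hcdf ν).add ((hcdf (-ν)).const_mul (rexp (2 * ν * h / σ ^ 2)))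
  refine (hformula.congr_of_eventuallyEq ?_).congr_deriv ?_
  · filter_upwards [lt_mem_nhds ht] with s hs
    exact if_neg hs.not_ge
  -- Both terms carry the same Gaussian factor, so the drift cancels from the sum of the derivatives
  -- `(± ν t + h) / (2 σ t √t)` of the two z-scores.
  · rw [← mul_assoc (rexp _), gaussianPDFReal_barrierZScore_neg_drift hσ ht,
      firstPassageDensity_eq_gaussianPDFReal_mul ht]
    field_simp
    ring

lemma barrierZScore_eq_add_neg :
    barrierZScore h ν σ = fun t => ν / σ * √t + -(h / σ * (√t)⁻¹) := by
  funext t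
  rw [barrierZScore, sub_div, mul_div_mul_comm, div_sqrt, div_mul_eq_div_div,
    div_eq_mul_inv (h / σ), sub_eq_add_neg]

lemma tendsto_barrierZScore_atTop (hν : 0 < ν) (hσ : 0 < σ) :
    Tendsto (barrierZScore h ν σ) atTop atTop := by
  rw [barrierZScore_eq_add_neg]
  exact (tendsto_sqrt_atTop.const_mul_atTop (div_pos hν hσ)).atTop_add
    ((tendsto_inv_atTop_zero.comp tendsto_sqrt_atTop).const_mul (h / σ)).neg

lemma tendsto_barrierZScore_atTop_of_neg (hν : ν < 0) (hσ : 0 < σ) :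
    Tendsto (barrierZScore h ν σ) atTop atBot := by
  have hneg : barrierZScore h ν σ = fun t => -barrierZScore (-h) (-ν) σ t := by
    funext t
    simp only [barrierZScore]
    ring
  rw [hneg]
  exact tendsto_neg_atTop_atBot.comp (tendsto_barrierZScore_atTop (neg_pos.2 hν) hσ)

lemma tendsto_barrierZScore_nhdsGT_zero (hh : 0 < h) (hσ : 0 < σ) :
    Tendsto (barrierZScore h ν σ) (𝓝[>] 0) atBot := by
  have hsqrt : Tendsto (fun t : ℝ => √t) (𝓝[>] 0) (𝓝[>] 0) := by
    refine tendsto_nhdsWithin_iff.2 ⟨?_, eventually_mem_nhdsWithin.mono fun t => sqrt_pos.2⟩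
    exact (continuous_sqrt.tendsto' 0 0 sqrt_zero).mono_left nhdsWithin_le_nhds
  rw [barrierZScore_eq_add_neg]
  exact ((tendsto_nhds_of_tendsto_nhdsWithin hsqrt).const_mul (ν / σ)).add_atBot
    (tendsto_neg_atTop_atBot.comp
      ((tendsto_inv_nhdsGT_zero.comp hsqrt).const_mul_atTop (div_pos hh hσ)))

lemma tendsto_firstPassageCDF_atTop (hν : 0 < ν) (hσ : 0 < σ) :
    Tendsto (firstPassageCDF h ν σ) atTop (𝓝 1) := by
  have hlim := ((tendsto_cdf_atTop (gaussianReal 0 1)).comp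
    (tendsto_barrierZScore_atTop (h := h) hν hσ)).add
    (((tendsto_cdf_atBot (gaussianReal 0 1)).comp
      (tendsto_barrierZScore_atTop_of_neg (h := h) (neg_neg_of_pos hν) hσ)).const_mul
        (rexp (2 * ν * h / σ ^ 2)))
  rw [mul_zero, add_zero] at hlim
  refine hlim.congr' ?_
  filter_upwards [eventually_gt_atTop 0] with t ht
  exact (if_neg ht.not_ge).symm

lemma continuousWithinAt_firstPassageCDF_zero (hh : 0 < h) (hσ : 0 < σ) :
    ContinuousWithinAt (firstPassageCDF h ν σ) (Ici 0) 0 := by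
  have hcdf (μ : ℝ) := (tendsto_cdf_atBot (gaussianReal 0 1)).comp
    (tendsto_barrierZScore_nhdsGT_zero (ν := μ) hh hσ)
  have hlim := (hcdf ν).add ((hcdf (-ν)).const_mul (rexp (2 * ν * h / σ ^ 2)))
  rw [mul_zero, add_zero] at hlim
  rw [← continuousWithinAt_Ioi_iff_Ici, ContinuousWithinAt, firstPassageCDF, if_pos le_rfl]
  refine hlim.congr' ?_
  filter_upwards [self_mem_nhdsWithin] with t ht
  exact (if_neg (not_le.2 ht)).symm

lemma integral_firstPassageDensity_eq_one (hh : 0 < h) (hν : 0 < ν) (hσ : 0 < σ) :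
    ∫ t, firstPassageDensity h ν σ t = 1 := by
  rw [← setIntegral_eq_integral_of_forall_compl_eq_zero (s := Ioi 0) fun t ht =>
      firstPassageDensity_of_nonpos (not_lt.1 ht),
    integral_Ioi_of_hasDerivAt_of_nonneg (continuousWithinAt_firstPassageCDF_zero hh hσ)
      (fun t ht => hasDerivAt_firstPassageCDF hσ.ne' ht)
      (fun t ht => firstPassageDensity_nonneg hh.le hσ.le (le_of_lt ht))
      (tendsto_firstPassageCDF_atTop hν hσ),
    firstPassageCDF, if_pos le_rfl, sub_zero]

lemma mul_firstPassageDensity_scaled {b r x k : ℝ} (hx : 0 < x) (hw : 0 < b + k / x) :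
    x * firstPassageDensity (ν * (b * x ^ 2) - r) ν σ (b * x ^ 2 + k * x) =
      gaussianPDFReal 0 1 ((ν * k + r / x) / (σ * √(b + k / x))) *
        ((ν * b - r / x ^ 2) / (σ * ((b + k / x) * √(b + k / x)))) := by
  have htime : b * x ^ 2 + k * x = x ^ 2 * (b + k / x) := by field_simp
  have hsqrt : √(x ^ 2 * (b + k / x)) = x * √(b + k / x) := by
    rw [sqrt_mul (sq_nonneg x), sqrt_sq hx.le]
  have hz : barrierZScore (ν * (b * x ^ 2) - r) ν σ (x ^ 2 * (b + k / x)) =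
      (ν * k + r / x) / (σ * √(b + k / x)) := by
    rw [barrierZScore, hsqrt, mul_left_comm σ x, ← div_div]
    congr 1
    field_simp
    ring
  rw [htime, firstPassageDensity_eq_gaussianPDFReal_mul (by positivity), hz, hsqrt, mul_left_comm]
  congr 1
  have : 0 < √(b + k / x) := sqrt_pos.2 hw
  generalize √(b + k / x) = s at *
  generalize b + k / x = w at *
  field_simp

lemma tendsto_mul_firstPassageDensity {b : ℝ} (hν : 0 < ν) (hσ : 0 < σ) (hb : 0 < b) (r k : ℝ) :
    Tendsto (fun x => x * firstPassageDensity (ν * (b * x ^ 2) - r) ν σ (b * x ^ 2 + k * x))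
      atTop (𝓝 (gaussianPDFReal 0 (σ ^ 2 * b / ν ^ 2).toNNReal k)) := by
  have hw : Tendsto (fun x => b + k / x) atTop (𝓝 b) := by
    simpa using (tendsto_id.const_div_atTop k).const_add b
  have hsw : Tendsto (fun x => √(b + k / x)) atTop (𝓝 √b) := hw.sqrt
  have hnum : Tendsto (fun x => ν * b - r / x ^ 2) atTop (𝓝 (ν * b)) := by
    simpa using ((tendsto_pow_atTop two_ne_zero).const_div_atTop r).const_sub (ν * b)
  have hshift : Tendsto (fun x => ν * k + r / x) atTop (𝓝 (ν * k)) := by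
    simpa using (tendsto_id.const_div_atTop r).const_add (ν * k)
  have hpdf := ((continuous_gaussianPDFReal 0 1).tendsto _).comp
    (hshift.div (hsw.const_mul σ) (by positivity))
  have hlim := hpdf.mul (hnum.div ((hw.mul hsw).const_mul σ) (by positivity))
  have hvalue : gaussianPDFReal 0 1 (ν * k / (σ * √b)) * (ν * b / (σ * (b * √b))) =
      gaussianPDFReal 0 (σ ^ 2 * b / ν ^ 2).toNNReal k := by
    have hscale := gaussianPDFReal_inv_mul (μ := 0) (v := 1) (c := σ * √b / ν) (by positivity) k
    have hvar : NNReal.mk ((σ * √b / ν) ^ 2) (sq_nonneg _) = (σ ^ 2 * b / ν ^ 2).toNNReal := by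
      rw [← toNNReal_of_nonneg, div_pow, mul_pow, sq_sqrt hb.le]
    rw [mul_zero, mul_one, hvar, abs_of_pos (by positivity), inv_div] at hscale
    rw [mul_div_right_comm, hscale]
    field_simp
  rw [hvalue] at hlim
  refine hlim.congr' ?_
  filter_upwards [eventually_gt_atTop 0, hw.eventually_const_lt hb] with x hx hwx
  exact (mul_firstPassageDensity_scaled hx hwx).symm

end FirstPassage

lemma integral_mul_comp_add_mul {s : ℝ} (hs : 0 < s) (f : ℝ → ℝ) (c : ℝ) :
    ∫ k, s * f (c + k * s) = ∫ t, f t := by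
  rw [integral_const_mul, Measure.integral_comp_mul_right (fun t => f (c + t)),
    integral_add_left_eq_self, abs_of_pos (inv_pos.2 hs), smul_eq_mul, mul_inv_cancel_left₀ hs.ne']

section HittingDensity

open ProbabilityTheory

variable {a r β σ : ℝ}

lemma one_sub_lam_sq (hD : 0 < 2 * a * β + σ ^ 2) :
    (1 - lam β σ a) ^ 2 = σ ^ 2 / (2 * a * β + σ ^ 2) := by
  rw [lam, sub_sub_cancel, div_pow, sq_sqrt hD.le]

lemma one_sub_lam_pos (hσ : 0 < σ) (hD : 0 < 2 * a * β + σ ^ 2) : 0 < 1 - lam β σ a := by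
  rw [lam, sub_sub_cancel]
  positivity

lemma two_mul_one_sub_lam_sq_mul_fN (hβ : β ≠ 0) (hσ : σ ≠ 0) (hD : 0 < 2 * a * β + σ ^ 2)
    (N : ℕ) : 2 * (1 - lam β σ a) ^ 2 * β * fN β σ a N / σ ^ 2 = Real.log N := by
  rw [one_sub_lam_sq hD, fN]
  field_simp
  ring

lemma natCast_mul_hittingDensity (hβ : β ≠ 0) (hσ : σ ≠ 0) (hD : 0 < 2 * a * β + σ ^ 2) {N : ℕ}
    (hN : N ≠ 0) (t : ℝ) :
    N * hittingDensity β σ a r N t = rexp (2 * (1 - lam β σ a) * β * r / σ ^ 2) *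
      firstPassageDensity ((1 - lam β σ a) * fN β σ a N - r) ((1 - lam β σ a) * β) σ t := by
  have hdrift : hittingDensity β σ a r N t = firstPassageDensity
      ((1 - lam β σ a) * fN β σ a N - r) (-((1 - lam β σ a) * β)) σ t := by
    rw [hittingDensity, firstPassageDensity, neg_mul, sub_neg_eq_add]
  have hexponent : Real.log N + -(2 * ((1 - lam β σ a) * β) * ((1 - lam β σ a) * fN β σ a N - r) /
      σ ^ 2) = 2 * (1 - lam β σ a) * β * r / σ ^ 2 := by
    rw [← two_mul_one_sub_lam_sq_mul_fN hβ hσ hD N]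
    ring
  have hlog : (N : ℝ) = rexp (Real.log N) := (exp_log (by positivity)).symm
  rw [hdrift, firstPassageDensity_neg_drift hσ, ← mul_assoc]
  nth_rewrite 1 [hlog]
  rw [← exp_add, hexponent]

lemma natCast_mul_sqrt_log_mul_hittingDensity (hβ : β ≠ 0) (hσ : σ ≠ 0)
    (hD : 0 < 2 * a * β + σ ^ 2) {N : ℕ} (hN : N ≠ 0) (t : ℝ) :
    N * √(Real.log N) * hittingDensity β σ a r N t =
      rexp (2 * (1 - lam β σ a) * β * r / σ ^ 2) * (√(Real.log N) *
        firstPassageDensity ((1 - lam β σ a) * fN β σ a N - r) ((1 - lam β σ a) * β) σ t) := by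
  rw [mul_right_comm, natCast_mul_hittingDensity hβ hσ hD hN]
  ring

lemma tendsto_sqrt_log_natCast_atTop : Tendsto (fun N : ℕ => √(Real.log N)) atTop atTop :=
  tendsto_sqrt_atTop.comp (tendsto_log_atTop.comp tendsto_natCast_atTop_atTop)

lemma tendsto_fN_atTop (hβ : 0 < β) (hD : 0 < 2 * a * β + σ ^ 2) :
    Tendsto (fN β σ a) atTop atTop := by
  have hslope : σ ^ 2 / (2 * β) + a = (2 * a * β + σ ^ 2) / (2 * β) := by
    field_simp
    ring
  have hpos : 0 < σ ^ 2 / (2 * β) + a := hslope ▸ by positivity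
  exact (tendsto_log_atTop.comp tendsto_natCast_atTop_atTop).const_mul_atTop hpos

lemma tendsto_scaled_hittingDensity (hβ : 0 < β) (hσ : 0 < σ) (hD : 0 < 2 * a * β + σ ^ 2)
    (r k : ℝ) :
    Tendsto (fun N : ℕ => N * √(Real.log N) * hittingDensity β σ a r N (TN β σ a N k)) atTop
      (𝓝 (rexp (2 * (1 - lam β σ a) * β * r / σ ^ 2) *
        gaussianPDFReal 0 ((2 * a * β + σ ^ 2) ^ 2 / (2 * β ^ 4)).toNNReal k)) := by
  set b := (2 * a * β + σ ^ 2) / (2 * β ^ 2) with hb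
  have hν : 0 < (1 - lam β σ a) * β := mul_pos (one_sub_lam_pos hσ hD) hβ
  have hvar : σ ^ 2 * b / ((1 - lam β σ a) * β) ^ 2 =
      (2 * a * β + σ ^ 2) ^ 2 / (2 * β ^ 4) := by
    rw [mul_pow, one_sub_lam_sq hD, hb]
    field_simp
  have hlim := ((tendsto_mul_firstPassageDensity hν hσ (b := b) (by positivity) r k).comp
    tendsto_sqrt_log_natCast_atTop).const_mul (rexp (2 * (1 - lam β σ a) * β * r / σ ^ 2))
  rw [hvar] at hlim
  refine hlim.congr' ?_
  filter_upwards [eventually_ne_atTop 0] with N hN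
  have hfN : fN β σ a N = β * (b * √(Real.log N) ^ 2) := by
    rw [sq_sqrt (log_natCast_nonneg N), fN, hb]
    field_simp
    ring
  rw [natCast_mul_sqrt_log_mul_hittingDensity hβ.ne' hσ.ne' hD hN, TN, hfN, ← mul_assoc _ β,
    mul_div_cancel_left₀ _ hβ.ne', Function.comp_apply]

lemma integral_scaled_hittingDensity (hβ : 0 < β) (hσ : 0 < σ) (hD : 0 < 2 * a * β + σ ^ 2)
    {N : ℕ} (hN : 1 < N) (hr : r < (1 - lam β σ a) * fN β σ a N) :
    ∫ k, N * √(Real.log N) * hittingDensity β σ a r N (TN β σ a N k) =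
      rexp (2 * (1 - lam β σ a) * β * r / σ ^ 2) := by
  have hlog : 0 < √(Real.log N) := sqrt_pos.2 (log_pos (mod_cast hN))
  simp only [natCast_mul_sqrt_log_mul_hittingDensity hβ.ne' hσ.ne' hD (Nat.ne_zero_of_lt hN), TN]
  rw [integral_const_mul, integral_mul_comp_add_mul hlog, integral_firstPassageDensity_eq_one
    (sub_pos.2 hr) (mul_pos (one_sub_lam_pos hσ hD) hβ) hσ, mul_one]

end HittingDensity

open ProbabilityTheory in
theorem hittingDensity_interchange_limit_integral_general
    (a r β σ : ℝ) (hβ : 0 < β) (hσ : 0 < σ) (hD : 0 < 2 * a * β + σ ^ 2) :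
    ∃ L : ℝ → ℝ,
      (∀ k : ℝ, Tendsto (fun N : ℕ =>
          (N : ℝ) * √(Real.log N) * hittingDensity β σ a r N (TN β σ a N k))
        atTop (𝓝 (L k))) ∧
      Tendsto (fun N : ℕ =>
          ∫ k : ℝ, (N : ℝ) * √(Real.log N) * hittingDensity β σ a r N (TN β σ a N k))
        atTop (𝓝 (∫ k : ℝ, L k)) ∧
      (∫ k : ℝ, L k) = rexp (2 * (1 - lam β σ a) * β * r / σ ^ 2) := by
  have hvar : ((2 * a * β + σ ^ 2) ^ 2 / (2 * β ^ 4)).toNNReal ≠ 0 :=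
    (toNNReal_pos.2 (by positivity)).ne'
  have hmass : ∫ k, rexp (2 * (1 - lam β σ a) * β * r / σ ^ 2) *
      gaussianPDFReal 0 ((2 * a * β + σ ^ 2) ^ 2 / (2 * β ^ 4)).toNNReal k =
      rexp (2 * (1 - lam β σ a) * β * r / σ ^ 2) := by
    rw [integral_const_mul, integral_gaussianPDFReal_eq_one 0 hvar, mul_one]
  have hlevel : ∀ᶠ N : ℕ in atTop, r < (1 - lam β σ a) * fN β σ a N :=
    ((tendsto_fN_atTop hβ hD).const_mul_atTop (one_sub_lam_pos hσ hD)).eventually_gt_atTop r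
  refine ⟨_, tendsto_scaled_hittingDensity hβ hσ hD r, ?_, hmass⟩
  rw [hmass]
  refine tendsto_const_nhds.congr' ?_
  filter_upwards [eventually_gt_atTop 1, hlevel] with N hN hr
  exact (integral_scaled_hittingDensity hβ hσ hD hN hr).symm

/-- **Interchange of limit and integral for the scaled hitting-time density:**
`lim_{N→∞} ∫ N √(log N) g_N(T_N(a,k)) dk = ∫ lim_{N→∞} N √(log N) g_N(T_N(a,k)) dk`,
and both sides equal `exp(2(1-λ(a))βr/σ²)`. -/
theorem hittingDensity_interchange_limit_integral
    (a r β σ σA : ℝ) (ha : 0 < a) (hβ : 0 < β) (hσ : 0 < σ) (hσA : 0 < σA) :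
    ∃ L : ℝ → ℝ,
      (∀ k : ℝ, Tendsto (fun N : ℕ =>
          (N : ℝ) * Real.sqrt (Real.log N) * hittingDensity β σ a r N (TN β σ a N k))
        atTop (𝓝 (L k))) ∧
      Tendsto (fun N : ℕ =>
          ∫ k : ℝ, (N : ℝ) * Real.sqrt (Real.log N) * hittingDensity β σ a r N (TN β σ a N k))
        atTop (𝓝 (∫ k : ℝ, L k)) ∧
      (∫ k : ℝ, L k) = Real.exp (2 * (1 - lam β σ a) * β * r / σ ^ 2) :=
  hittingDensity_interchange_limit_integral_general a r β σ hβ hσ (by positivity)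

end
end
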